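/- arXiv:1512.07553 — 3 statements merged into one kernel-verified Lean document; each statement's English description precedes it below -/
import Mathlib

section
/- Let Φ ∈ L¹(ℝ) be nonnegative and suppose there exists C₀ > 0 such that ∫_{|t| ≥ R} Φ(t) dt ≤ C₀/R for all R ≥ 1. Then there exists a constant C > 0 such that for every real-valued Schwartz function f on ℝ one has ∬_{ℝ²} |f(x) − f(y)|² Φ(x − y) dx dy ≤ C ∫_ℝ |ξ| |f̂(ξ)|² dξ, where f̂(ξ) = ∫_ℝ f(x) e^{−2πi x ξ} dx is the Fourier transform of f. -/
/-!
Substituting `x = y + t` writes the left-hand side as `∫ Φ(t) ‖f(· + t) - f‖² dt`. By Plancherel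
this equals `∫ m(ξ) |f̂(ξ)|² dξ` with `m(ξ) = ∫ |e^{2πi⟨t,ξ⟩} - 1|² Φ(t) dt`, so it suffices to
bound `m(ξ)` by a multiple of `|ξ|`. Since `|e^{2πi⟨t,ξ⟩} - 1| ≤ 2π|ξ| min(|t|, (π|ξ|)⁻¹)`, this
amounts to bounding the second moment of `Φ` truncated at height `(π|ξ|)⁻¹`, which the layer cake
formula does in terms of the tails of `Φ`. The same argument with tails `O(R^{-α})`, `α < 2`, gives
`m(ξ) = O(|ξ|^α)`.
-/

open MeasureTheory FourierTransform Set SchwartzMap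
open scoped ENNReal Real RealInnerProductSpace

theorem integrable_and_integral_le_of_lintegral_ofReal_le {X : Type*} [MeasurableSpace X]
    {μ : Measure X} {f : X → ℝ} (hfm : AEStronglyMeasurable f μ) (hf : 0 ≤ᵐ[μ] f) {c : ℝ}
    (hc : 0 ≤ c) (h : ∫⁻ x, ENNReal.ofReal (f x) ∂μ ≤ ENNReal.ofReal c) :
    Integrable f μ ∧ ∫ x, f x ∂μ ≤ c := by
  refine ⟨(lintegral_ofReal_ne_top_iff_integrable hfm hf).1
    (ne_top_of_le_ne_top ENNReal.ofReal_ne_top h), ?_⟩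
  rw [integral_eq_lintegral_of_nonneg_ae hf hfm]
  exact ENNReal.toReal_le_of_le_ofReal hc h

section PowerTail

variable {E : Type*} [NormedAddCommGroup E] [MeasurableSpace E]

/-- The measure `μ` has tails of order `α` with constant `K`, that is
`μ {t | s ≤ ‖t‖} ≤ K / s ^ α` for all `s > 0`. Multiplying out the denominator keeps the
condition meaningful for every `K : ℝ≥0∞`. -/
def HasPowerTail (μ : Measure E) (α : ℝ) (K : ℝ≥0∞) : Prop :=
  ∀ s > 0, ENNReal.ofReal (s ^ α) * μ {t | s ≤ ‖t‖} ≤ K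

theorem lintegral_Ioc_rpow {q R : ℝ} (hq : -1 < q) (hR : 0 ≤ R) :
    ∫⁻ s in Ioc 0 R, ENNReal.ofReal (s ^ q) = ENNReal.ofReal (R ^ (q + 1) / (q + 1)) := by
  have hint : IntegrableOn (fun s : ℝ => s ^ q) (Ioc 0 R) :=
    (intervalIntegrable_iff_integrableOn_Ioc_of_le hR).1
      (intervalIntegral.intervalIntegrable_rpow' hq)
  have hnonneg : 0 ≤ᵐ[volume.restrict (Ioc 0 R)] fun s : ℝ => s ^ q :=
    ae_restrict_of_forall_mem measurableSet_Ioc fun s hs => Real.rpow_nonneg hs.1.le q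
  rw [← ofReal_integral_eq_lintegral_ofReal hint hnonneg,
    ← intervalIntegral.integral_of_le hR, integral_rpow (.inl hq),
    Real.zero_rpow (by linarith), sub_zero]

theorem HasPowerTail.lintegral_min_norm_rpow_le [OpensMeasurableSpace E] {μ : Measure E}
    {α p R : ℝ} {K : ℝ≥0∞} (hμ : HasPowerTail μ α K) (hp : 0 < p) (hαp : α < p) (hR : 0 ≤ R) :
    ∫⁻ t, ENNReal.ofReal (min ‖t‖ R ^ p) ∂μ
      ≤ ENNReal.ofReal (p * (R ^ (p - α) / (p - α))) * K := by
  have hmeas_le (s : ℝ) (hs : 0 < s) :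
      μ {t | s ≤ min ‖t‖ R} * ENNReal.ofReal (s ^ (p - 1))
        ≤ (Iic R).indicator (fun s => ENNReal.ofReal (s ^ (p - α - 1)) * K) s := by
    by_cases hsR : s ≤ R
    · have hpow : s ^ (p - 1) = s ^ (p - α - 1) * s ^ α := by
        rw [← Real.rpow_add hs]
        ring_nf
      rw [indicator_of_mem (mem_Iic.2 hsR), hpow, ENNReal.ofReal_mul (by positivity),
        mul_comm, mul_assoc]
      simp only [le_min_iff, hsR, and_true]
      gcongr
      exact hμ s hs
    · simp [hsR]
  calc
    _ = ENNReal.ofReal p *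
          ∫⁻ s in Ioi 0, μ {t | s ≤ min ‖t‖ R} * ENNReal.ofReal (s ^ (p - 1)) :=
      lintegral_rpow_eq_lintegral_meas_le_mul μ
        (.of_forall fun t => le_min (norm_nonneg t) hR) (by fun_prop) hp
    _ ≤ ENNReal.ofReal p *
          ∫⁻ s in Ioi 0, (Iic R).indicator (fun s => ENNReal.ofReal (s ^ (p - α - 1)) * K) s := by
      gcongr 1
      exact setLIntegral_mono' measurableSet_Ioi hmeas_le
    _ = ENNReal.ofReal p * ∫⁻ s in Ioc 0 R, ENNReal.ofReal (s ^ (p - α - 1)) * K := by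
      rw [lintegral_indicator measurableSet_Iic, Measure.restrict_restrict measurableSet_Iic,
        Iic_inter_Ioi]
    _ = _ := by
      rw [lintegral_mul_const _ (by fun_prop), lintegral_Ioc_rpow (by linarith) hR,
        sub_add_cancel, ← mul_assoc, ← ENNReal.ofReal_mul hp.le]

theorem hasPowerTail_withDensity [OpensMeasurableSpace E] {ν : Measure E} {Φ : E → ℝ}
    (hΦ_int : Integrable Φ ν) (hΦ_nonneg : 0 ≤ Φ) {α C₀ : ℝ} (hα : 0 ≤ α)
    (hΦ_tail : ∀ R ≥ (1 : ℝ), ∫ t in {t | R ≤ ‖t‖}, Φ t ∂ν ≤ C₀ / R ^ α) :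
    HasPowerTail (ν.withDensity fun t => ENNReal.ofReal (Φ t)) α
      (ENNReal.ofReal (max C₀ (∫ t, Φ t ∂ν))) := by
  intro s hs
  rw [withDensity_apply _ (measurableSet_le measurable_const measurable_norm),
    ← ofReal_integral_eq_lintegral_ofReal hΦ_int.integrableOn (.of_forall hΦ_nonneg),
    ← ENNReal.ofReal_mul (by positivity)]
  refine ENNReal.ofReal_le_ofReal ?_
  rcases le_total 1 s with hs1 | hs1
  · refine le_max_of_le_left ?_
    rw [mul_comm, ← le_div_iff₀ (by positivity)]
    exact hΦ_tail s hs1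
  · refine le_max_of_le_right ?_
    calc
      _ ≤ 1 * ∫ t in {t | s ≤ ‖t‖}, Φ t ∂ν := by
        gcongr
        · exact integral_nonneg hΦ_nonneg
        · exact Real.rpow_le_one hs.le hs1 hα
      _ ≤ ∫ t, Φ t ∂ν := by
        rw [one_mul]
        exact setIntegral_le_integral hΦ_int (.of_forall hΦ_nonneg)

end PowerTail

section Energy

variable {E F : Type*} [AddCommGroup E] [MeasureSpace E] [NormedAddCommGroup F]

/-- The nonlocal energy `∫ ‖f(· + t) - f‖²_{L²} dμ(t)` of a function `f`, with jumps `t` weighted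
by `μ`. It is `ℝ≥0∞`-valued, so no integrability is presupposed. -/
noncomputable def nonlocalEnergy (μ : Measure E) (f : E → F) : ℝ≥0∞ :=
  ∫⁻ t, (∫⁻ y, ‖f (y + t) - f y‖ₑ ^ 2) ∂μ

theorem nonlocalEnergy_withDensity [MeasurableAdd₂ E] [MeasurableNeg E]
    [SFinite (volume : Measure E)] [(volume : Measure E).IsAddLeftInvariant]
    {φ : E → ℝ≥0∞} (hφ : AEMeasurable φ) {f : E → F} (hf : StronglyMeasurable f) :
    nonlocalEnergy (volume.withDensity φ) f
      = ∫⁻ p : E × E, ‖f p.1 - f p.2‖ₑ ^ 2 * φ (p.1 - p.2) := by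
  have hmeas {X : Type _} [MeasurableSpace X] {a b : X → E} (ha : Measurable a)
      (hb : Measurable b) : Measurable fun x => ‖f (a x) - f (b x)‖ₑ ^ 2 :=
    ((hf.comp_measurable ha).sub (hf.comp_measurable hb)).enorm.pow_const 2
  have hincr : Measurable fun p : E × E => ‖f (p.2 + p.1) - f p.2‖ₑ ^ 2 :=
    hmeas (by fun_prop) (by fun_prop)
  have hshear : MeasurePreserving (fun p : E × E => (p.1 + p.2, p.2)) :=
    measurePreserving_add_prod volume volume
  have hφ_sub : AEMeasurable fun p : E × E => φ (p.1 - p.2) :=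
    hφ.comp_quasiMeasurePreserving (quasiMeasurePreserving_sub volume volume)
  calc
    _ = ∫⁻ t, φ t * ∫⁻ y, ‖f (y + t) - f y‖ₑ ^ 2 :=
      lintegral_withDensity_eq_lintegral_mul₀ hφ hincr.lintegral_prod_right'.aemeasurable
    _ = ∫⁻ t, ∫⁻ y, ‖f (y + t) - f y‖ₑ ^ 2 * φ t := by
      refine lintegral_congr fun t => ?_
      rw [mul_comm, lintegral_mul_const _ (hmeas (by fun_prop) (by fun_prop))]
    _ = ∫⁻ p : E × E, ‖f (p.2 + p.1) - f p.2‖ₑ ^ 2 * φ p.1 :=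
      (lintegral_prod _ (hincr.aemeasurable.mul hφ.comp_fst)).symm
    _ = ∫⁻ p : E × E, ‖f p.1 - f p.2‖ₑ ^ 2 * φ (p.1 - p.2) := by
      have hkernel : AEMeasurable fun p : E × E => ‖f p.1 - f p.2‖ₑ ^ 2 * φ (p.1 - p.2) :=
        (hmeas measurable_fst measurable_snd).aemeasurable.mul hφ_sub
      have hmap := lintegral_map' (hshear.map_eq ▸ hkernel) hshear.aemeasurable
      simpa only [hshear.map_eq, add_sub_cancel_right, add_comm] using hmap.symm

end Energy

section Symbol

variable {V : Type*} [NormedAddCommGroup V] [InnerProductSpace ℝ V]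

theorem norm_fourierChar_sub_one_le (x : ℝ) : ‖(𝐞 x : ℂ) - 1‖ ≤ 2 * min (π * |x|) 1 := by
  rw [mul_min_of_nonneg _ _ zero_le_two, mul_one]
  refine le_min ?_ ?_
  · calc
      ‖(𝐞 x : ℂ) - 1‖ = ‖Complex.exp (Complex.I * ↑(2 * π * x)) - 1‖ := by
        rw [Real.fourierChar_apply, mul_comm]
      _ ≤ ‖2 * π * x‖ := Real.norm_exp_I_mul_ofReal_sub_one_le
      _ = 2 * (π * |x|) := by
        rw [Real.norm_eq_abs, abs_mul, abs_of_pos Real.two_pi_pos, mul_assoc]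
  · calc
      ‖(𝐞 x : ℂ) - 1‖ ≤ ‖(𝐞 x : ℂ)‖ + ‖(1 : ℂ)‖ := norm_sub_le _ _
      _ = 2 := by
        rw [Circle.norm_coe, norm_one, one_add_one_eq_two]

theorem norm_fourierChar_inner_sub_one_le (t : V) {ξ : V} (hξ : ξ ≠ 0) :
    ‖(𝐞 ⟪t, ξ⟫ : ℂ) - 1‖ ≤ 2 * (π * ‖ξ‖) * min ‖t‖ (π * ‖ξ‖)⁻¹ := by
  have hr : 0 < π * ‖ξ‖ := mul_pos Real.pi_pos (norm_pos_iff.2 hξ)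
  rw [mul_assoc, mul_min_of_nonneg _ _ hr.le, mul_inv_cancel₀ hr.ne', mul_assoc, mul_comm ‖ξ‖]
  refine (norm_fourierChar_sub_one_le _).trans ?_
  gcongr
  exact abs_real_inner_le_norm t ξ

variable [MeasurableSpace V]

/-- The Fourier symbol `m(ξ) = ∫ |e^{2πi⟨t,ξ⟩} - 1|² dμ(t)` of the translation-invariant form
`nonlocalEnergy μ`. -/
noncomputable def nonlocalSymbol (μ : Measure V) (ξ : V) : ℝ≥0∞ :=
  ∫⁻ t, ‖(𝐞 ⟪t, ξ⟫ : ℂ) - 1‖ₑ ^ 2 ∂μ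

theorem HasPowerTail.nonlocalSymbol_le [OpensMeasurableSpace V] {μ : Measure V} {α : ℝ} {K : ℝ≥0∞}
    (hμ : HasPowerTail μ α K) (hα : α < 2) (ξ : V) :
    nonlocalSymbol μ ξ ≤ ENNReal.ofReal (8 * (π * ‖ξ‖) ^ α / (2 - α)) * K := by
  rcases eq_or_ne ξ 0 with rfl | hξ
  · simp [nonlocalSymbol]
  set r : ℝ := π * ‖ξ‖
  have hr : 0 < r := mul_pos Real.pi_pos (norm_pos_iff.2 hξ)
  calc
    nonlocalSymbol μ ξ
      ≤ ∫⁻ t, ENNReal.ofReal ((2 * r) ^ 2) * ENNReal.ofReal (min ‖t‖ r⁻¹ ^ (2 : ℝ)) ∂μ := by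
      refine lintegral_mono fun t => ?_
      rw [← ofReal_norm, ← ENNReal.ofReal_pow (norm_nonneg _), ← ENNReal.ofReal_mul (by positivity),
        Real.rpow_two, ← mul_pow]
      gcongr
      exact norm_fourierChar_inner_sub_one_le t hξ
    _ = ENNReal.ofReal ((2 * r) ^ 2) * ∫⁻ t, ENNReal.ofReal (min ‖t‖ r⁻¹ ^ (2 : ℝ)) ∂μ :=
      lintegral_const_mul _ (by fun_prop)
    _ ≤ ENNReal.ofReal ((2 * r) ^ 2) *
          (ENNReal.ofReal (2 * (r⁻¹ ^ (2 - α) / (2 - α))) * K) := by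
      gcongr
      exact hμ.lintegral_min_norm_rpow_le two_pos hα (inv_nonneg.2 hr.le)
    _ = ENNReal.ofReal (8 * r ^ α / (2 - α)) * K := by
      have hscale : r ^ 2 * r⁻¹ ^ (2 - α) = r ^ α := by
        rw [Real.inv_rpow hr.le, ← Real.rpow_neg hr.le, ← Real.rpow_two, ← Real.rpow_add hr]
        ring_nf
      rw [← mul_assoc, ← ENNReal.ofReal_mul (by positivity), ← hscale]
      ring_nf

end Symbol

section Schwartz

theorem integrable_norm_rpow_mul_norm_sq {V F : Type*} [NormedAddCommGroup V]
    [InnerProductSpace ℝ V] [MeasurableSpace V] [BorelSpace V] [SecondCountableTopology V]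
    [NormedAddCommGroup F] [NormedSpace ℝ F] (μ : Measure V) [μ.HasTemperateGrowth] (f : 𝓢(V, F))
    {α : ℝ} (hα : 0 ≤ α) : Integrable (fun x => ‖x‖ ^ α * ‖f x‖ ^ 2) μ := by
  let w (x : V) : ℝ := (1 + ‖x‖ ^ 2) ^ (α / 4)
  have hw : w.HasTemperateGrowth := Function.hasTemperateGrowth_one_add_norm_sq_rpow V (α / 4)
  have hint : Integrable (fun x => ‖smulLeftCLM F w f x‖ ^ 2) μ :=
    ((smulLeftCLM F w f).memLp 2 μ).integrable_norm_pow two_ne_zero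
  refine hint.mono' (by fun_prop (disch := assumption)) (.of_forall fun x => ?_)
  have hw_sq : w x ^ 2 = (1 + ‖x‖ ^ 2) ^ (α / 2) := by
    rw [← Real.rpow_mul_natCast (by positivity)]
    ring_nf
  have hpow : ‖x‖ ^ α = (‖x‖ ^ 2) ^ (α / 2) := by
    rw [← Real.rpow_natCast_mul (norm_nonneg x), Nat.cast_ofNat, mul_div_cancel₀ _ two_ne_zero]
  calc
    ‖‖x‖ ^ α * ‖f x‖ ^ 2‖ = (‖x‖ ^ 2) ^ (α / 2) * ‖f x‖ ^ 2 := by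
      rw [Real.norm_of_nonneg (by positivity), hpow]
    _ ≤ (1 + ‖x‖ ^ 2) ^ (α / 2) * ‖f x‖ ^ 2 := by
      gcongr
      exact le_add_of_nonneg_left zero_le_one
    _ = ‖smulLeftCLM F w f x‖ ^ 2 := by
      rw [smulLeftCLM_apply_apply hw, norm_smul, mul_pow, Real.norm_eq_abs, sq_abs, hw_sq]

variable {V H : Type*} [NormedAddCommGroup V] [InnerProductSpace ℝ V] [FiniteDimensional ℝ V]
  [MeasurableSpace V] [BorelSpace V] [NormedAddCommGroup H] [InnerProductSpace ℂ H]

theorem fourier_compSubConstCLM_neg (f : 𝓢(V, H)) (t ξ : V) :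
    𝓕 (f.compSubConstCLM ℂ (-t)) ξ = (𝐞 ⟪t, ξ⟫ : ℂ) • 𝓕 f ξ := by
  have hcomp : ⇑(f.compSubConstCLM ℂ (-t)) = f ∘ fun x => x + t := by
    ext x
    simp
  have h := congrFun (VectorFourier.fourierIntegral_comp_add_right 𝐞 volume (innerₗ V) f t) ξ
  rw [← hcomp] at h
  exact h

variable [CompleteSpace H]

theorem lintegral_enorm_sq_fourier (f : 𝓢(V, H)) :
    ∫⁻ ξ, ‖𝓕 f ξ‖ₑ ^ 2 = ∫⁻ x, ‖f x‖ₑ ^ 2 := by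
  have hofReal (g : 𝓢(V, H)) : ∫⁻ x, ‖g x‖ₑ ^ 2 = ENNReal.ofReal (∫ x, ‖g x‖ ^ 2) := by
    have hint : Integrable fun x => ‖g x‖ ^ 2 := (g.memLp 2).integrable_norm_pow two_ne_zero
    simpa using (ofReal_integral_norm_eq_lintegral_enorm hint).symm
  rw [hofReal, hofReal, integral_norm_sq_fourier]

theorem lintegral_enorm_sub_sq_eq (f : 𝓢(V, H)) (t : V) :
    ∫⁻ y, ‖f (y + t) - f y‖ₑ ^ 2 = ∫⁻ ξ, ‖(𝐞 ⟪t, ξ⟫ : ℂ) - 1‖ₑ ^ 2 * ‖𝓕 f ξ‖ₑ ^ 2 := by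
  have hfourier (ξ : V) :
      𝓕 (f.compSubConstCLM ℂ (-t) - f) ξ = ((𝐞 ⟪t, ξ⟫ : ℂ) - 1) • 𝓕 f ξ := by
    have hsub : 𝓕 (f.compSubConstCLM ℂ (-t) - f) = 𝓕 (f.compSubConstCLM ℂ (-t)) - 𝓕 f :=
      map_sub (fourierCLM ℂ 𝓢(V, H)) _ _
    rw [hsub, sub_apply, fourier_compSubConstCLM_neg, sub_smul, one_smul]
  have hplancherel := lintegral_enorm_sq_fourier (f.compSubConstCLM ℂ (-t) - f)
  simp only [hfourier, enorm_smul, mul_pow] at hplancherel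
  simpa only [sub_apply, compSubConstCLM_apply, sub_neg_eq_add] using hplancherel.symm

theorem nonlocalEnergy_eq_lintegral_nonlocalSymbol (μ : Measure V) [SFinite μ] (f : 𝓢(V, H)) :
    nonlocalEnergy μ f = ∫⁻ ξ, nonlocalSymbol μ ξ * ‖𝓕 f ξ‖ₑ ^ 2 := by
  simp only [nonlocalEnergy, nonlocalSymbol, lintegral_enorm_sub_sq_eq]
  rw [lintegral_lintegral_swap (by fun_prop)]
  exact lintegral_congr fun ξ => lintegral_mul_const _ (by fun_prop)

theorem HasPowerTail.nonlocalEnergy_le {μ : Measure V} [SFinite μ] {α : ℝ} {K : ℝ≥0∞}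
    (hμ : HasPowerTail μ α K) (hα : α < 2) (f : 𝓢(V, H)) :
    nonlocalEnergy μ f
      ≤ ENNReal.ofReal (8 * π ^ α / (2 - α)) * K *
        ∫⁻ ξ, ENNReal.ofReal (‖ξ‖ ^ α * ‖𝓕 f ξ‖ ^ 2) := by
  have hc : 0 ≤ 8 * π ^ α / (2 - α) := div_nonneg (by positivity) (sub_pos.2 hα).le
  have hnorm : Measurable fun ξ => ‖𝓕 f ξ‖ := (𝓕 f).continuous.norm.measurable
  rw [nonlocalEnergy_eq_lintegral_nonlocalSymbol, ← lintegral_const_mul _ (by fun_prop)]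
  refine lintegral_mono fun ξ => ?_
  calc
    nonlocalSymbol μ ξ * ‖𝓕 f ξ‖ₑ ^ 2
      ≤ ENNReal.ofReal (8 * (π * ‖ξ‖) ^ α / (2 - α)) * K * ‖𝓕 f ξ‖ₑ ^ 2 := by
      gcongr
      exact hμ.nonlocalSymbol_le hα ξ
    _ = ENNReal.ofReal (8 * π ^ α / (2 - α)) * K * ENNReal.ofReal (‖ξ‖ ^ α * ‖𝓕 f ξ‖ ^ 2) := by
      rw [Real.mul_rpow Real.pi_nonneg (norm_nonneg ξ), ← mul_assoc, mul_div_right_comm,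
        ENNReal.ofReal_mul hc, ENNReal.ofReal_mul (by positivity),
        ENNReal.ofReal_pow (norm_nonneg _), ofReal_norm]
      ring

theorem balanced_rigidity_stmt11_general {Φ : V → ℝ} (hΦ_int : Integrable Φ) (hΦ_nonneg : 0 ≤ Φ)
    {α C₀ : ℝ} (hα₀ : 0 ≤ α) (hα₂ : α < 2)
    (hΦ_tail : ∀ R ≥ (1 : ℝ), ∫ t in {t | R ≤ ‖t‖}, Φ t ≤ C₀ / R ^ α) (f : 𝓢(V, H)) :
    Integrable (fun p : V × V => ‖f p.1 - f p.2‖ ^ 2 * Φ (p.1 - p.2)) ∧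
      ∫ p : V × V, ‖f p.1 - f p.2‖ ^ 2 * Φ (p.1 - p.2)
        ≤ 8 * π ^ α / (2 - α) * max C₀ (∫ t, Φ t) * ∫ ξ, ‖ξ‖ ^ α * ‖𝓕 f ξ‖ ^ 2 := by
  set c : ℝ := 8 * π ^ α / (2 - α) * max C₀ (∫ t, Φ t)
  have hc₀ : 0 ≤ 8 * π ^ α / (2 - α) := div_nonneg (by positivity) (sub_pos.2 hα₂).le
  have hc : 0 ≤ c := mul_nonneg hc₀ (le_max_of_le_right (integral_nonneg hΦ_nonneg))
  have hmeas : AEStronglyMeasurable fun p : V × V => ‖f p.1 - f p.2‖ ^ 2 * Φ (p.1 - p.2) :=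
    .mul (by fun_prop)
      (hΦ_int.1.comp_quasiMeasurePreserving (quasiMeasurePreserving_sub volume volume))
  refine integrable_and_integral_le_of_lintegral_ofReal_le hmeas
    (.of_forall fun p => mul_nonneg (sq_nonneg _) (hΦ_nonneg _))
    (mul_nonneg hc (integral_nonneg fun ξ => by positivity)) ?_
  have hle := (hasPowerTail_withDensity hΦ_int hΦ_nonneg hα₀ hΦ_tail).nonlocalEnergy_le hα₂ f
  rw [nonlocalEnergy_withDensity hΦ_int.aemeasurable.ennreal_ofReal
      f.continuous.stronglyMeasurable, ← ENNReal.ofReal_mul hc₀,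
    ← ofReal_integral_eq_lintegral_ofReal (integrable_norm_rpow_mul_norm_sq volume _ hα₀)
      (.of_forall fun ξ => by positivity), ← ENNReal.ofReal_mul hc] at hle
  simpa only [ENNReal.ofReal_mul (sq_nonneg ‖_‖), ENNReal.ofReal_pow (norm_nonneg _), ofReal_norm]
    using hle

end Schwartz

open MeasureTheory FourierTransform in
/-- If `Φ ≥ 0` is integrable with tail bound `∫_{|t| ≥ R} Φ ≤ C₀/R` for `R ≥ 1`, then there
is `C > 0` such that `∬ (f(x)-f(y))² Φ(x-y) dx dy ≤ C ∫ |ξ| |f̂(ξ)|² dξ` for every real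
Schwartz function `f`. -/
theorem balanced_rigidity_stmt11
    (Φ : ℝ → ℝ) (hΦ_int : Integrable Φ) (hΦ_nonneg : ∀ t, 0 ≤ Φ t)
    (C₀ : ℝ) (hC₀ : 0 < C₀)
    (hΦ_tail : ∀ R ≥ (1 : ℝ), (∫ t in {t : ℝ | R ≤ |t|}, Φ t) ≤ C₀ / R) :
    ∃ C > (0 : ℝ), ∀ f : SchwartzMap ℝ ℝ,
      (∫ p : ℝ × ℝ, (f p.1 - f p.2) ^ 2 * Φ (p.1 - p.2))
        ≤ C * ∫ ξ : ℝ, |ξ| * ‖𝓕 (fun x : ℝ => (f x : ℂ)) ξ‖ ^ 2 := by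
  refine ⟨8 * π ^ (1 : ℝ) / (2 - 1) * max C₀ (∫ t, Φ t), by norm_num; positivity, fun f => ?_⟩
  have hcomplex : ⇑(f.postcompCLM Complex.ofRealCLM) = fun x => (f x : ℂ) := rfl
  simpa [← Complex.ofReal_sub, fourier_coe, hcomplex] using
    (balanced_rigidity_stmt11_general hΦ_int hΦ_nonneg zero_le_one one_lt_two
      (by simpa using hΦ_tail) (f.postcompCLM Complex.ofRealCLM)).2
end

section
/- Let Φ ∈ L¹(ℝ) be nonnegative and let f be a Schwartz function on ℝ. Then ∬_{ℝ²} |f(x + t) − f(x)|² Φ(t) dx dt = ∫_ℝ |f̂(ξ)|² ( 2 Φ̂(0) − Φ̂(ξ) − Φ̂(−ξ) ) dξ, where f̂(ξ) = ∫_ℝ f(x) e^{−2πi x ξ} dx and Φ̂(ξ) = ∫_ℝ Φ(t) e^{−2πi t ξ} dt. -/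
/-!
For fixed `t`, Plancherel turns `∫ ‖f (x + t) - f x‖ ^ 2 dx` into
`∫ ‖𝓕 f ξ‖ ^ 2 * ‖𝐞 ⟪t, ξ⟫ - 1‖ ^ 2 dξ`, since translation by `t` acts on the Fourier side as
multiplication by `𝐞 ⟪t, ξ⟫`. Integrating against `Φ t` and exchanging the two integrals, it
remains to expand `‖𝐞 ⟪t, ξ⟫ - 1‖ ^ 2 = 2 - 𝐞 (-⟪t, ξ⟫) - 𝐞 ⟪t, ξ⟫`: the three terms integrate
against `Φ` to `2 • 𝓕 Φ 0`, `𝓕 Φ ξ` and `𝓕 Φ (-ξ)`.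
-/

open MeasureTheory FourierTransform
open scoped RealInnerProductSpace SchwartzMap

section Difference

variable {G E F : Type*} [AddGroup G] [MeasurableSpace G] [MeasurableAdd₂ G]
  [NormedAddCommGroup E] [NormedSpace ℝ E] [NormedAddCommGroup F]
  {μ ν : Measure G} [SFinite μ] [SFinite ν] [μ.IsAddRightInvariant]

theorem integrable_norm_add_sub_pow_smul {f : G → F} {Φ : G → E} {n : ℕ} (hn : n ≠ 0)
    (hf : MemLp f n μ) (hΦ : Integrable Φ ν) :
    Integrable (fun z : G × G => ‖f (z.1 + z.2) - f z.1‖ ^ n • Φ z.2) (μ.prod ν) := by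
  have hshear : MeasurePreserving (fun z : G × G => (z.1 + z.2, z.2)) (μ.prod ν) (μ.prod ν) :=
    measurePreserving_add_prod μ ν
  have hbase : Integrable (fun z : G × G => ‖f z.1‖ ^ n * ‖Φ z.2‖) (μ.prod ν) :=
    (hf.integrable_norm_pow hn).mul_prod hΦ.norm
  have hshift : Integrable (fun z : G × G => ‖f (z.1 + z.2)‖ ^ n * ‖Φ z.2‖) (μ.prod ν) :=
    hshear.integrable_comp_of_integrable hbase
  have hf_fst : AEStronglyMeasurable (fun z : G × G => f z.1) (μ.prod ν) :=
    hf.aestronglyMeasurable.comp_fst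
  have hf_add : AEStronglyMeasurable (fun z : G × G => f (z.1 + z.2)) (μ.prod ν) :=
    hf_fst.comp_measurePreserving hshear
  refine ((hshift.add hbase).const_mul (2 ^ (n - 1))).mono'
    (((hf_add.sub hf_fst).norm.pow n).smul hΦ.aestronglyMeasurable.comp_snd)
    (.of_forall fun z => ?_)
  calc ‖‖f (z.1 + z.2) - f z.1‖ ^ n • Φ z.2‖
      = ‖f (z.1 + z.2) - f z.1‖ ^ n * ‖Φ z.2‖ := by rw [norm_smul, norm_pow, norm_norm]
    _ ≤ (‖f (z.1 + z.2)‖ + ‖f z.1‖) ^ n * ‖Φ z.2‖ := by gcongr; exact norm_sub_le _ _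
    _ ≤ 2 ^ (n - 1) * (‖f (z.1 + z.2)‖ ^ n + ‖f z.1‖ ^ n) * ‖Φ z.2‖ := by
      gcongr; exact add_pow_le (norm_nonneg _) (norm_nonneg _) n
    _ = 2 ^ (n - 1) * (‖f (z.1 + z.2)‖ ^ n * ‖Φ z.2‖ + ‖f z.1‖ ^ n * ‖Φ z.2‖) := by ring

end Difference

section FourierChar

variable {E : Type*} [NormedAddCommGroup E] [NormedSpace ℂ E]

theorem norm_fourierChar_sub_one_sq_smul (x : ℝ) (v : E) :
    ‖(𝐞 x : ℂ) - 1‖ ^ 2 • v = (2 : ℂ) • v - 𝐞 (-x) • v - 𝐞 x • v := by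
  have hexpand : ((‖(𝐞 x : ℂ) - 1‖ ^ 2 : ℝ) : ℂ) = 2 - 𝐞 (-x) - 𝐞 x := by
    rw [Complex.norm_sub_one_sq_eq_of_norm_eq_one (Circle.norm_coe _), AddChar.map_neg_eq_inv,
      Circle.coe_inv_eq_conj]
    have hre := Complex.add_conj (𝐞 x : ℂ)
    push_cast at hre ⊢
    linear_combination hre
  rw [← Complex.coe_smul, hexpand, sub_smul, sub_smul, Circle.smul_def, Circle.smul_def]

theorem norm_fourierChar_sub_one_sq_le (x : ℝ) : ‖(𝐞 x : ℂ) - 1‖ ^ 2 ≤ 4 := by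
  rw [Complex.norm_sub_one_sq_eq_of_norm_eq_one (Circle.norm_coe _)]
  linarith [(abs_le.1 ((Complex.abs_re_le_norm _).trans_eq (Circle.norm_coe (𝐞 x)))).1]

variable {V : Type*} [NormedAddCommGroup V] [InnerProductSpace ℝ V] [FiniteDimensional ℝ V]
  [MeasurableSpace V] [BorelSpace V]

theorem integral_norm_fourierChar_sub_one_sq_smul {Φ : V → E} (hΦ : Integrable Φ) (ξ : V) :
    ∫ t, ‖(𝐞 ⟪t, ξ⟫ : ℂ) - 1‖ ^ 2 • Φ t = (2 : ℂ) • 𝓕 Φ 0 - 𝓕 Φ ξ - 𝓕 Φ (-ξ) := by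
  have hneg : Integrable fun t => 𝐞 (-⟪t, ξ⟫) • Φ t := (Real.fourierIntegral_convergent_iff ξ).2 hΦ
  have hpos : Integrable fun t => 𝐞 ⟪t, ξ⟫ • Φ t := by
    simpa using (Real.fourierIntegral_convergent_iff (-ξ)).2 hΦ
  have htwo : Integrable fun t => (2 : ℂ) • Φ t := hΦ.smul 2
  have hsub : Integrable fun t => (2 : ℂ) • Φ t - 𝐞 (-⟪t, ξ⟫) • Φ t := htwo.sub hneg
  simp_rw [norm_fourierChar_sub_one_sq_smul]
  rw [integral_sub hsub hpos, integral_sub htwo hneg, integral_smul]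
  simp [Real.fourier_eq]

theorem integrable_mul_norm_fourierChar_sub_one_sq_smul {F : Type*} [NormedAddCommGroup F]
    [NormedSpace ℝ F] {μ ν : Measure V} [SFinite μ] [SFinite ν] {g : V → ℝ} {Φ : V → F}
    (hg : Integrable g ν) (hΦ : Integrable Φ μ) :
    Integrable (fun z : V × V => (g z.2 * ‖(𝐞 ⟪z.1, z.2⟫ : ℂ) - 1‖ ^ 2) • Φ z.1) (μ.prod ν) := by
  have hprod : Integrable (fun z : V × V => g z.2 • Φ z.1) (μ.prod ν) := (hg.smul_prod hΦ).swap
  have hkernel : Continuous fun z : V × V => ‖(𝐞 ⟪z.1, z.2⟫ : ℂ) - 1‖ ^ 2 := by fun_prop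
  refine (hprod.bdd_smul 4 hkernel.aestronglyMeasurable (.of_forall fun z => ?_)).congr
    (.of_forall fun z => ?_)
  · simpa using norm_fourierChar_sub_one_sq_le ⟪z.1, z.2⟫
  · simp only [Pi.smul_apply', smul_smul, mul_comm]

end FourierChar

section Schwartz

variable {V H E : Type*} [NormedAddCommGroup V] [InnerProductSpace ℝ V] [FiniteDimensional ℝ V]
  [MeasurableSpace V] [BorelSpace V] [NormedAddCommGroup H] [InnerProductSpace ℂ H]
  [NormedAddCommGroup E] [NormedSpace ℂ E]

theorem fourier_comp_add_right (f : V → E) (t ξ : V) :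
    𝓕 (fun x => f (x + t)) ξ = 𝐞 ⟪t, ξ⟫ • 𝓕 f ξ :=
  congrFun (VectorFourier.fourierIntegral_comp_add_right 𝐞 volume (innerₗ V) f t) ξ

theorem fourier_compSubConstCLM_neg_sub (f : 𝓢(V, E)) (t ξ : V) :
    𝓕 (f.compSubConstCLM ℂ (-t) - f) ξ = ((𝐞 ⟪t, ξ⟫ : ℂ) - 1) • 𝓕 f ξ := by
  have htranslate : ⇑(f.compSubConstCLM ℂ (-t)) = fun x => f (x + t) := by
    ext x
    simp
  have hsub : 𝓕 (f.compSubConstCLM ℂ (-t) - f) = 𝓕 (f.compSubConstCLM ℂ (-t)) - 𝓕 f :=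
    map_sub (fourierCLM ℂ 𝓢(V, E)) _ _
  rw [hsub, sub_apply, sub_smul, one_smul, SchwartzMap.fourier_coe, htranslate,
    fourier_comp_add_right, Circle.smul_def, SchwartzMap.fourier_coe]

theorem integral_norm_add_sub_sq_eq_integral_fourier [CompleteSpace H] (f : 𝓢(V, H)) (t : V) :
    ∫ x, ‖f (x + t) - f x‖ ^ 2 = ∫ ξ, ‖𝓕 f ξ‖ ^ 2 * ‖(𝐞 ⟪t, ξ⟫ : ℂ) - 1‖ ^ 2 :=
  calc ∫ x, ‖f (x + t) - f x‖ ^ 2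
      = ∫ x, ‖(f.compSubConstCLM ℂ (-t) - f) x‖ ^ 2 := by simp
    _ = ∫ ξ, ‖𝓕 (f.compSubConstCLM ℂ (-t) - f) ξ‖ ^ 2 :=
      (SchwartzMap.integral_norm_sq_fourier _).symm
    _ = ∫ ξ, ‖𝓕 f ξ‖ ^ 2 * ‖(𝐞 ⟪t, ξ⟫ : ℂ) - 1‖ ^ 2 := by
      simp_rw [fourier_compSubConstCLM_neg_sub, norm_smul, mul_pow, mul_comm]

theorem balanced_rigidity_stmt12_general [CompleteSpace H] [CompleteSpace E] {Φ : V → E}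
    (hΦ : Integrable Φ) (f : 𝓢(V, H)) :
    ∫ z : V × V, ‖f (z.1 + z.2) - f z.1‖ ^ 2 • Φ z.2
      = ∫ ξ, ‖𝓕 f ξ‖ ^ 2 • ((2 : ℂ) • 𝓕 Φ 0 - 𝓕 Φ ξ - 𝓕 Φ (-ξ)) := by
  have hdiff : Integrable (fun z : V × V => ‖f (z.1 + z.2) - f z.1‖ ^ 2 • Φ z.2)
      (volume.prod volume) := integrable_norm_add_sub_pow_smul two_ne_zero (f.memLp 2) hΦ
  have hf : Integrable fun ξ => ‖𝓕 f ξ‖ ^ 2 := ((𝓕 f).memLp 2).integrable_norm_pow two_ne_zero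
  calc ∫ z : V × V, ‖f (z.1 + z.2) - f z.1‖ ^ 2 • Φ z.2
      = ∫ t, (∫ x, ‖f (x + t) - f x‖ ^ 2) • Φ t := by
        rw [Measure.volume_eq_prod, integral_prod_symm _ hdiff]
        simp_rw [integral_smul_const]
    _ = ∫ t, ∫ ξ, (‖𝓕 f ξ‖ ^ 2 * ‖(𝐞 ⟪t, ξ⟫ : ℂ) - 1‖ ^ 2) • Φ t := by
        simp_rw [integral_norm_add_sub_sq_eq_integral_fourier, integral_smul_const]
    _ = ∫ ξ, ∫ t, (‖𝓕 f ξ‖ ^ 2 * ‖(𝐞 ⟪t, ξ⟫ : ℂ) - 1‖ ^ 2) • Φ t :=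
        integral_integral_swap (integrable_mul_norm_fourierChar_sub_one_sq_smul hf hΦ)
    _ = ∫ ξ, ‖𝓕 f ξ‖ ^ 2 • ((2 : ℂ) • 𝓕 Φ 0 - 𝓕 Φ ξ - 𝓕 Φ (-ξ)) := by
        simp_rw [mul_smul, integral_smul, integral_norm_fourierChar_sub_one_sq_smul hΦ]

end Schwartz

open MeasureTheory FourierTransform in
/-- For nonnegative integrable `Φ` and Schwartz `f`:
`∬ (f(x+t)-f(x))² Φ(t) dx dt = ∫ |f̂(ξ)|² (2Φ̂(0) - Φ̂(ξ) - Φ̂(-ξ)) dξ`. -/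
theorem balanced_rigidity_stmt12
    (Φ : ℝ → ℝ) (hΦ_int : Integrable Φ) (hΦ_nonneg : ∀ t, 0 ≤ Φ t)
    (f : SchwartzMap ℝ ℝ) :
    ((∫ p : ℝ × ℝ, (f (p.1 + p.2) - f p.1) ^ 2 * Φ p.2 : ℝ) : ℂ)
      = ∫ ξ : ℝ, (‖𝓕 (fun x : ℝ => (f x : ℂ)) ξ‖ ^ 2 : ℂ) *
          (2 * 𝓕 (fun t : ℝ => (Φ t : ℂ)) 0
            - 𝓕 (fun t : ℝ => (Φ t : ℂ)) ξ - 𝓕 (fun t : ℝ => (Φ t : ℂ)) (-ξ)) := by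
  have h := balanced_rigidity_stmt12_general (hΦ_int.ofReal (𝕜 := ℂ))
    (f.postcompCLM Complex.ofRealCLM)
  have hcoe : ⇑(f.postcompCLM Complex.ofRealCLM) = fun x => (f x : ℂ) := rfl
  rw [← integral_complex_ofReal]
  simpa [SchwartzMap.fourier_coe, hcoe, Function.comp_def, ← Complex.ofReal_sub] using h
end

section
/- For every δ > 0 and every ε > 0 there exists a nonnegative, even, smooth compactly supported function ψ : ℝ → ℝ with support contained in [−δ, δ], such that ∫_ℝ ψ(ξ) dξ = 1 and ∫_ℝ |ξ| ψ(ξ)² dξ ≤ ε. -/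
/-!
The weight `|ξ|` is critical for the profile `f = |ξ|⁻¹`: from `|ξ| * f ≤ 1` one gets
`∫ |ξ| * f ^ 2 ≤ ∫ f`, so dividing `f` by its mass `M` makes the weighted square integral at most
`M⁻¹`. Since `|ξ|⁻¹` is not integrable at the origin, regularizing it at scale `r` and truncating
it by a fixed bump function gives even test functions whose mass grows like `log r⁻¹` as `r → 0`.
-/

section NormalizedMass

open MeasureTheory

variable {α : Type*} [MeasurableSpace α] {μ : Measure α} {w f : α → ℝ}

lemma integral_mul_sq_le_integral_of_mul_le_one (hf : Integrable f μ) (hw : 0 ≤ᵐ[μ] w)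
    (hf₀ : 0 ≤ᵐ[μ] f) (hwf : ∀ᵐ x ∂μ, w x * f x ≤ 1) :
    ∫ x, w x * f x ^ 2 ∂μ ≤ ∫ x, f x ∂μ := by
  refine integral_mono_of_nonneg ?_ hf ?_
  · filter_upwards [hw] with x hwx using mul_nonneg hwx (sq_nonneg _)
  · filter_upwards [hf₀, hwf] with x hfx hwfx
    calc w x * f x ^ 2 = w x * f x * f x := by ring
      _ ≤ f x := mul_le_of_le_one_left hfx hwfx

lemma integral_mul_sq_normalized_le_inv_integral (hf : Integrable f μ) (hw : 0 ≤ᵐ[μ] w)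
    (hf₀ : 0 ≤ᵐ[μ] f) (hwf : ∀ᵐ x ∂μ, w x * f x ≤ 1) :
    ∫ x, w x * ((∫ y, f y ∂μ)⁻¹ * f x) ^ 2 ∂μ ≤ (∫ x, f x ∂μ)⁻¹ := by
  set M := ∫ x, f x ∂μ
  calc ∫ x, w x * (M⁻¹ * f x) ^ 2 ∂μ = M⁻¹ ^ 2 * ∫ x, w x * f x ^ 2 ∂μ := by
        simp_rw [mul_pow, mul_left_comm (w _), integral_const_mul]
    _ ≤ M⁻¹ ^ 2 * M := by
        gcongr
        exact integral_mul_sq_le_integral_of_mul_le_one hf hw hf₀ hwf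
    _ = M⁻¹ := by simpa only [sq, inv_inv] using mul_self_mul_inv M⁻¹

end NormalizedMass

section RegInvNorm

/-- The regularization `(‖x‖ ^ 2 + r ^ 2) ^ (-1 / 2)` of `‖x‖⁻¹` at scale `r`, which is smooth on an
inner product space when `r ≠ 0`. -/
noncomputable def regInvNorm {E : Type*} [Norm E] (r : ℝ) (x : E) : ℝ :=
  (√(‖x‖ ^ 2 + r ^ 2))⁻¹

lemma regInvNorm_nonneg {E : Type*} [Norm E] (r : ℝ) (x : E) : 0 ≤ regInvNorm r x :=
  inv_nonneg.2 (Real.sqrt_nonneg _)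

variable {E : Type*} [SeminormedAddCommGroup E]

lemma regInvNorm_neg (r : ℝ) (x : E) : regInvNorm r (-x) = regInvNorm r x := by
  simp only [regInvNorm, norm_neg]

lemma norm_mul_regInvNorm_le_one (r : ℝ) (x : E) : ‖x‖ * regInvNorm r x ≤ 1 :=
  div_le_one_of_le₀ (Real.le_sqrt_of_sq_le (le_add_of_nonneg_right (sq_nonneg r)))
    (Real.sqrt_nonneg _)

lemma inv_norm_add_le_regInvNorm {r : ℝ} (hr : 0 < r) (x : E) :
    (‖x‖ + r)⁻¹ ≤ regInvNorm r x := by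
  have hsqrt_le : √(‖x‖ ^ 2 + r ^ 2) ≤ ‖x‖ + r :=
    Real.sqrt_le_iff.2 ⟨by positivity, by nlinarith [mul_nonneg (norm_nonneg x) hr.le]⟩
  exact inv_anti₀ (by positivity) hsqrt_le

lemma contDiff_regInvNorm {F : Type*} [NormedAddCommGroup F] [InnerProductSpace ℝ F]
    {n : WithTop ℕ∞} {r : ℝ} (hr : r ≠ 0) : ContDiff ℝ n (regInvNorm r : F → ℝ) := by
  have hpos (x : F) : 0 < ‖x‖ ^ 2 + r ^ 2 := by positivity
  exact (((contDiff_norm_sq ℝ).add contDiff_const).sqrt fun x => (hpos x).ne').inv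
    fun x => (Real.sqrt_pos.2 (hpos x)).ne'

end RegInvNorm

section TruncatedInvNorm

open MeasureTheory

variable {E : Type*} [NormedAddCommGroup E]

/-- The regularized inverse norm at scale `r`, truncated by the bump function `b`: up to
normalization, the test function with small weighted square integral. -/
noncomputable def truncInvNorm [NormedSpace ℝ E] [HasContDiffBump E]
    (b : ContDiffBump (0 : E)) (r : ℝ) (x : E) : ℝ :=
  b x * regInvNorm r x

section NormedSpace

variable [NormedSpace ℝ E] [HasContDiffBump E] (b : ContDiffBump (0 : E)) (r : ℝ)

lemma truncInvNorm_nonneg (x : E) : 0 ≤ truncInvNorm b r x :=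
  mul_nonneg b.nonneg (regInvNorm_nonneg r x)

lemma truncInvNorm_neg (x : E) : truncInvNorm b r (-x) = truncInvNorm b r x := by
  simp only [truncInvNorm, b.neg, regInvNorm_neg]

lemma norm_mul_truncInvNorm_le_one (x : E) : ‖x‖ * truncInvNorm b r x ≤ 1 :=
  calc ‖x‖ * truncInvNorm b r x ≤ ‖x‖ * regInvNorm r x := by
        gcongr
        exact mul_le_of_le_one_left (regInvNorm_nonneg r x) b.le_one
    _ ≤ 1 := norm_mul_regInvNorm_le_one r x

variable {r} in
lemma inv_norm_add_le_truncInvNorm (hr : 0 < r) {x : E} (hx : ‖x‖ ≤ b.rIn) :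
    (‖x‖ + r)⁻¹ ≤ truncInvNorm b r x := by
  rw [truncInvNorm, b.one_of_mem_closedBall (mem_closedBall_zero_iff.2 hx), one_mul]
  exact inv_norm_add_le_regInvNorm hr x

lemma tsupport_truncInvNorm_subset :
    tsupport (truncInvNorm b r) ⊆ Metric.closedBall 0 b.rOut :=
  tsupport_mul_subset_left.trans b.tsupport_eq.subset

lemma hasCompactSupport_truncInvNorm [FiniteDimensional ℝ E] :
    HasCompactSupport (truncInvNorm b r) :=
  b.hasCompactSupport.mul_right

end NormedSpace

variable [InnerProductSpace ℝ E] (b : ContDiffBump (0 : E)) {r : ℝ}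

lemma contDiff_truncInvNorm {n : ℕ∞} (hr : r ≠ 0) : ContDiff ℝ n (truncInvNorm b r) :=
  b.contDiff.mul (contDiff_regInvNorm hr)

lemma integrable_truncInvNorm [FiniteDimensional ℝ E] [MeasurableSpace E] [BorelSpace E]
    {μ : Measure E} [IsFiniteMeasureOnCompacts μ] (hr : r ≠ 0) :
    Integrable (truncInvNorm b r) μ :=
  (contDiff_truncInvNorm (n := 0) b hr).continuous.integrable_of_hasCompactSupport
    (hasCompactSupport_truncInvNorm b r)

end TruncatedInvNorm

section LogarithmicMass

open MeasureTheory Filter Topology Set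

lemma integral_inv_add_eq_log {a r : ℝ} (ha : 0 ≤ a) (hr : 0 < r) :
    ∫ x in (0 : ℝ)..a, (x + r)⁻¹ = Real.log (1 + a / r) := by
  rw [intervalIntegral.integral_comp_add_right (fun x => x⁻¹), zero_add,
    integral_inv_of_pos hr (by positivity), add_div, div_self hr.ne', add_comm]

variable (b : ContDiffBump (0 : ℝ))

lemma log_one_add_div_le_integral_truncInvNorm {r : ℝ} (hr : 0 < r) :
    Real.log (1 + b.rIn / r) ≤ ∫ x, truncInvNorm b r x := by
  have hb : 0 ≤ b.rIn := b.rIn_pos.le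
  have hint : Integrable (truncInvNorm b r) := integrable_truncInvNorm b hr.ne'
  have hint_inv : IntervalIntegrable (fun x : ℝ => (x + r)⁻¹) volume 0 b.rIn := by
    refine ContinuousOn.intervalIntegrable_of_Icc hb (ContinuousOn.inv₀ (by fun_prop) ?_)
    exact fun x hx => (add_pos_of_nonneg_of_pos hx.1 hr).ne'
  calc Real.log (1 + b.rIn / r) = ∫ x in (0 : ℝ)..b.rIn, (x + r)⁻¹ :=
        (integral_inv_add_eq_log hb hr).symm
    _ ≤ ∫ x in (0 : ℝ)..b.rIn, truncInvNorm b r x := by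
        refine intervalIntegral.integral_mono_on hb hint_inv hint.intervalIntegrable fun x hx => ?_
        have hnorm : ‖x‖ = x := Real.norm_of_nonneg hx.1
        simpa only [hnorm] using inv_norm_add_le_truncInvNorm b hr (hnorm.trans_le hx.2)
    _ = ∫ x in Ioc 0 b.rIn, truncInvNorm b r x := intervalIntegral.integral_of_le hb
    _ ≤ ∫ x, truncInvNorm b r x :=
        setIntegral_le_integral hint (.of_forall (truncInvNorm_nonneg b r))

lemma tendsto_integral_truncInvNorm_atTop :
    Tendsto (fun r => ∫ x, truncInvNorm b r x) (𝓝[>] 0) atTop := by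
  have hlog : Tendsto (fun r => Real.log (1 + b.rIn / r)) (𝓝[>] 0) atTop :=
    Real.tendsto_log_atTop.comp <| tendsto_atTop_add_const_left _ 1 <|
      tendsto_inv_nhdsGT_zero.const_mul_atTop b.rIn_pos
  refine tendsto_atTop_mono' _ ?_ hlog
  filter_upwards [self_mem_nhdsWithin] with r hr
  exact log_one_add_div_le_integral_truncInvNorm b hr

end LogarithmicMass

open MeasureTheory in
/-- For every `δ > 0` and `ε > 0` there is a nonnegative, even, smooth compactly supported
`ψ` with support in `[-δ, δ]`, `∫ ψ = 1` and `∫ |ξ| ψ(ξ)² dξ ≤ ε`. -/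
theorem balanced_rigidity_stmt14 (δ : ℝ) (hδ : 0 < δ) (ε : ℝ) (hε : 0 < ε) :
    ∃ ψ : ℝ → ℝ,
      ContDiff ℝ (⊤ : ℕ∞) ψ ∧
      HasCompactSupport ψ ∧
      (∀ ξ, 0 ≤ ψ ξ) ∧
      (∀ ξ, ψ (-ξ) = ψ ξ) ∧
      tsupport ψ ⊆ Set.Icc (-δ) δ ∧
      (∫ ξ : ℝ, ψ ξ) = 1 ∧
      (∫ ξ : ℝ, |ξ| * ψ ξ ^ 2) ≤ ε := by
  let b : ContDiffBump (0 : ℝ) := ⟨δ / 2, δ, half_pos hδ, half_lt_self hδ⟩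
  obtain ⟨r, hmass, hr⟩ : ∃ r, ε⁻¹ ≤ (∫ x, truncInvNorm b r x) ∧ 0 < r :=
    (((tendsto_integral_truncInvNorm_atTop b).eventually_ge_atTop ε⁻¹).and
      self_mem_nhdsWithin).exists
  set M := ∫ x, truncInvNorm b r x with hM
  have hM_pos : 0 < M := (inv_pos.2 hε).trans_le hmass
  refine ⟨fun x => M⁻¹ * truncInvNorm b r x, contDiff_const.mul (contDiff_truncInvNorm b hr.ne'),
    (hasCompactSupport_truncInvNorm b r).mul_left,
    fun x => mul_nonneg (inv_nonneg.2 hM_pos.le) (truncInvNorm_nonneg b r x),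
    fun x => congrArg (M⁻¹ * ·) (truncInvNorm_neg b r x), ?tsupport_subset,
    ?integral_eq_one, ?weighted_le⟩
  case tsupport_subset =>
    calc tsupport (fun x => M⁻¹ * truncInvNorm b r x) ⊆ tsupport (truncInvNorm b r) :=
          tsupport_mul_subset_right
      _ ⊆ Metric.closedBall 0 δ := tsupport_truncInvNorm_subset b r
      _ = Set.Icc (-δ) δ := by rw [Real.closedBall_eq_Icc, zero_sub, zero_add]
  case integral_eq_one => rw [integral_const_mul, ← hM, inv_mul_cancel₀ hM_pos.ne']
  case weighted_le =>
    exact (integral_mul_sq_normalized_le_inv_integral (integrable_truncInvNorm b hr.ne')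
      (.of_forall abs_nonneg) (.of_forall (truncInvNorm_nonneg b r))
      (.of_forall (norm_mul_truncInvNorm_le_one b r))).trans (inv_le_of_inv_le₀ hε hmass)
end
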